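/- Let 0 < α < 1. Then the second-order global Padé approximant of Zeng and Chen for E_{α,α}(−x), namely R^{3,2}_{α,α}(x) = α / (Γ(1+α) + (2 Γ(1−α)² / Γ(1−2α)) x + Γ(1−α) x²), satisfies E_{α,α}(−x) − R^{3,2}_{α,α}(x) = O(x^{−4}) as x → ∞; that is, there exist C, R > 0 such that |E_{α,α}(−x) − R^{3,2}_{α,α}(x)| ≤ C x^{−4} for all x > R. (For α = 1/2 the middle coefficient is interpreted as 0, consistent with Γ(0) = 0 in Mathlib's convention so that division yields 0.) -/

import Mathlib

open MeasureTheory Set Filter Topology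

noncomputable section

namespace ZC

lemma expint {s : ℝ} (hs : 0 < s) :
    Integrable (fun u : ℝ => Real.exp (-Real.exp u) * Real.exp (s * u)) ∧
    ∫ u : ℝ, Real.exp (-Real.exp u) * Real.exp (s * u) = Real.Gamma s := by
  have him : Real.exp '' univ = Ioi 0 := by rw [image_univ, Real.range_exp]
  have hd : ∀ x ∈ (univ : Set ℝ), HasDerivWithinAt Real.exp (Real.exp x) univ x :=
    fun x _ => (Real.hasDerivAt_exp x).hasDerivWithinAt
  have hinj : InjOn Real.exp univ := Real.exp_injective.injOn
  have he : ∀ u : ℝ, |Real.exp u| • (Real.exp (-Real.exp u) * (Real.exp u) ^ (s - 1))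
      = Real.exp (-Real.exp u) * Real.exp (s * u) := by
    intro u
    rw [abs_of_pos (Real.exp_pos u), ← Real.exp_mul, smul_eq_mul, mul_left_comm, ← Real.exp_add]
    congr 2; ring
  have h1 := Real.GammaIntegral_convergent hs
  rw [← him, integrableOn_image_iff_integrableOn_abs_deriv_smul MeasurableSet.univ hd hinj] at h1
  have h2 := Real.Gamma_eq_integral hs
  rw [← him, integral_image_eq_integral_abs_deriv_smul MeasurableSet.univ hd hinj] at h2
  simp only [he, integrableOn_univ, Measure.restrict_univ] at h1 h2
  exact ⟨h1, h2.symm⟩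

lemma expint_Ioi (s c : ℝ) :
    IntegrableOn (fun u : ℝ => Real.exp (-Real.exp u) * Real.exp (s * u)) (Ioi c) := by
  have h1 := (expint (s := |s| + 1) (by positivity)).1.integrableOn (s := Ioi c)
  refine Integrable.mono' (h1.const_mul (Real.exp ((s - (|s| + 1)) * c))) ?_ ?_
  · exact (by fun_prop : Continuous _).aestronglyMeasurable
  · refine (ae_restrict_iff' measurableSet_Ioi).2 (Eventually.of_forall fun u hu => ?_)
    have hu : c < u := hu
    have h3 : Real.exp (s * u) ≤ Real.exp ((s - (|s| + 1)) * c) * Real.exp ((|s| + 1) * u) := by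
      rw [← Real.exp_add]
      apply Real.exp_le_exp.2
      nlinarith [le_abs_self s]
    rw [Real.norm_of_nonneg (by positivity), mul_left_comm]
    gcongr

/-- jump across the cut -/
def jmp (g : ℂ → ℂ) (u : ℝ) : ℂ := g (u + Real.pi * Complex.I) - g (u - Real.pi * Complex.I)

def vert (c : ℝ) (g : ℂ → ℂ) : ℂ :=
  Complex.I * ∫ θ in (-Real.pi)..Real.pi, g (c + θ * Complex.I)

def L (c : ℝ) (g : ℂ → ℂ) : ℂ := vert c g + ∫ u in Ioi c, jmp g u

lemma L_indep_le (g : ℂ → ℂ) (hd : ∀ w : ℂ, |w.im| ≤ Real.pi → DifferentiableAt ℂ g w)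
    (hi : ∀ c, IntegrableOn (jmp g) (Ioi c)) {c d : ℝ} (hcd : c ≤ d) : L c g = L d g := by
  have hpi := Real.pi_pos
  have h := Complex.integral_boundary_rect_eq_zero_of_differentiableOn g
    (c - Real.pi * Complex.I) (d + Real.pi * Complex.I) (by
      intro w hw
      refine (hd w ?_).differentiableWithinAt
      rw [Complex.mem_reProdIm] at hw
      have := hw.2
      simp only [Complex.sub_im, Complex.add_im, Complex.ofReal_im, Complex.mul_im,
        Complex.ofReal_re, Complex.I_im, Complex.I_re] at this
      rw [uIcc_of_le (by linarith)] at this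
      rw [abs_le]
      constructor
      · linarith [this.1]
      · linarith [this.2])
  have hc1 : Continuous fun u : ℝ => g (u + Real.pi * Complex.I) := by
    rw [continuous_iff_continuousAt]
    intro u
    have := (hd (u + Real.pi * Complex.I) (by simp [abs_of_pos hpi])).continuousAt
    exact ContinuousAt.comp (f := fun u : ℝ => (u + Real.pi * Complex.I : ℂ)) this (by fun_prop)
  have hc2 : Continuous fun u : ℝ => g (u - Real.pi * Complex.I) := by
    rw [continuous_iff_continuousAt]
    intro u
    have := (hd (u - Real.pi * Complex.I) (by simp [abs_of_pos hpi])).continuousAt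
    exact ContinuousAt.comp (f := fun u : ℝ => (u - Real.pi * Complex.I : ℂ)) this (by fun_prop)
  have e : ∫ u in c..d, jmp g u = (∫ u in c..d, g (u + Real.pi * Complex.I))
      - ∫ u in c..d, g (u - Real.pi * Complex.I) := by
    unfold jmp
    exact intervalIntegral.integral_sub (hc1.intervalIntegrable _ _) (hc2.intervalIntegrable _ _)
  have e2 : (∫ u in Ioi c, jmp g u) = (∫ u in c..d, jmp g u) + ∫ u in Ioi d, jmp g u := by
    rw [intervalIntegral.integral_of_le hcd, ← setIntegral_union (by simp) measurableSet_Ioi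
      ((hi c).mono_set Ioc_subset_Ioi_self) (hi d), Ioc_union_Ioi_eq_Ioi hcd]
  simp only [Complex.sub_im, Complex.add_im, Complex.ofReal_im, Complex.mul_im, Complex.add_re,
        Complex.sub_re, Complex.mul_re,
        Complex.ofReal_re, Complex.I_im, Complex.I_re, mul_zero, mul_one, sub_zero,
        add_zero, zero_add, zero_sub, smul_eq_mul, Complex.ofReal_neg, neg_mul,
        ← sub_eq_add_neg] at h
  unfold L vert
  rw [e2, e]
  linear_combination -h

lemma L_eq_of_tendsto (g : ℂ → ℂ) (hd : ∀ w : ℂ, |w.im| ≤ Real.pi → DifferentiableAt ℂ g w)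
    (hi : Integrable (jmp g)) (v : ℂ) (hv : Tendsto (fun c => vert c g) atBot (𝓝 v)) (c : ℝ) :
    L c g = v + ∫ u, jmp g u := by
  have h1 : Tendsto (fun c => L c g) atBot (𝓝 (v + ∫ u, jmp g u)) :=
    hv.add ((aecover_Ioi tendsto_id).integral_tendsto_of_countably_generated hi)
  have h2 : Tendsto (fun c => L c g) atBot (𝓝 (L c g)) := by
    refine tendsto_const_nhds.congr' ?_
    filter_upwards [eventually_le_atBot c] with d hdc
    exact (L_indep_le g hd (fun c => hi.integrableOn) hdc).symm
  exact tendsto_nhds_unique h2 h1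

lemma vert_tendsto (g : ℂ → ℂ) (C δ : ℝ) (hδ : 0 < δ)
    (h : ∀ᶠ c : ℝ in atBot, ∀ θ : ℝ, ‖g (c + θ * Complex.I)‖ ≤ C * Real.exp (δ * c)) :
    Tendsto (fun c => vert c g) atBot (𝓝 0) := by
  have ht : Tendsto (fun c : ℝ => C * Real.exp (δ * c) * |Real.pi - -Real.pi|) atBot (𝓝 0) := by
    have : Tendsto (fun c : ℝ => Real.exp (δ * c)) atBot (𝓝 0) :=
      Real.tendsto_exp_atBot.comp (tendsto_id.const_mul_atBot hδ)
    simpa using (this.const_mul C).mul_const (|Real.pi - -Real.pi|)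
  refine squeeze_zero_norm' ?_ ht
  filter_upwards [h] with c hc
  unfold vert
  rw [norm_mul, Complex.norm_I, one_mul]
  exact intervalIntegral.norm_integral_le_of_norm_le_const fun θ _ => hc θ

def gJ (s : ℝ) (w : ℂ) : ℂ := Complex.exp (Complex.exp w) * Complex.exp (s * w)

lemma gJ_diff (s : ℝ) (w : ℂ) : DifferentiableAt ℂ (gJ s) w := by
  unfold gJ; fun_prop

lemma exp_add_pi (u : ℝ) : Complex.exp (u + Real.pi * Complex.I) = ((-Real.exp u : ℝ) : ℂ) := by
  rw [Complex.exp_add, Complex.exp_pi_mul_I]; simp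

lemma exp_sub_pi (u : ℝ) : Complex.exp (u - Real.pi * Complex.I) = ((-Real.exp u : ℝ) : ℂ) := by
  rw [Complex.exp_sub, Complex.exp_pi_mul_I, div_neg, div_one]; simp

lemma gJ_add (s u : ℝ) : gJ s (u + Real.pi * Complex.I) =
    ((Real.exp (-Real.exp u) * Real.exp (s * u) : ℝ) : ℂ) *
      Complex.exp ((Real.pi * s : ℝ) * Complex.I) := by
  unfold gJ
  rw [exp_add_pi, mul_add, Complex.exp_add]
  push_cast
  rw [mul_assoc]; congr 3; ring_nf

lemma gJ_sub (s u : ℝ) : gJ s (u - Real.pi * Complex.I) =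
    ((Real.exp (-Real.exp u) * Real.exp (s * u) : ℝ) : ℂ) *
      Complex.exp (((-(Real.pi * s) : ℝ)) * Complex.I) := by
  unfold gJ
  rw [exp_sub_pi, mul_sub, sub_eq_add_neg, Complex.exp_add]
  push_cast
  rw [mul_assoc]; congr 3; ring_nf

lemma jmp_gJ (s u : ℝ) : jmp (gJ s) u =
    ((Real.exp (-Real.exp u) * Real.exp (s * u) : ℝ) : ℂ) *
      (2 * Complex.I * (Real.sin (Real.pi * s) : ℝ)) := by
  unfold jmp
  rw [gJ_add, gJ_sub, Complex.exp_mul_I, Complex.exp_mul_I]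
  push_cast
  rw [Complex.cos_neg, Complex.sin_neg]
  ring

lemma gJ_int (s c : ℝ) : IntegrableOn (jmp (gJ s)) (Ioi c) := by
  have : jmp (gJ s) = fun u => ((Real.exp (-Real.exp u) * Real.exp (s * u) : ℝ) : ℂ) *
      (2 * Complex.I * (Real.sin (Real.pi * s) : ℝ)) := funext fun u => jmp_gJ s u
  rw [this]
  exact (expint_Ioi s c).ofReal.mul_const _

lemma norm_gJ_le (s c θ : ℝ) :
    ‖gJ s (c + θ * Complex.I)‖ ≤ Real.exp (Real.exp c) * Real.exp (s * c) := by
  unfold gJ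
  rw [norm_mul]
  gcongr
  · refine (Complex.norm_exp_le_exp_norm _).trans ?_
    rw [Complex.norm_exp]; simp
  · rw [Complex.norm_exp]; simp

lemma L_gJ_pos {s : ℝ} (hs : 0 < s) (c : ℝ) :
    L c (gJ s) = 2 * Real.pi * Complex.I / (Real.Gamma (1 - s) : ℝ) := by
  have hj : jmp (gJ s) = fun u => ((Real.exp (-Real.exp u) * Real.exp (s * u) : ℝ) : ℂ) *
      (2 * Complex.I * (Real.sin (Real.pi * s) : ℝ)) := funext fun u => jmp_gJ s u
  have h := expint hs
  have hv := vert_tendsto (gJ s) (Real.exp 1) s hs (by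
    filter_upwards [eventually_le_atBot 0] with c hc θ
    refine (norm_gJ_le s c θ).trans ?_
    gcongr
    exact Real.exp_le_one_iff.2 hc)
  rw [L_eq_of_tendsto _ (fun w _ => gJ_diff s w) (by rw [hj]; exact h.1.ofReal.mul_const _) 0 hv,
    zero_add, hj, integral_mul_const, integral_complex_ofReal, h.2]
  have hr := Real.Gamma_mul_Gamma_one_sub s
  have hG := Real.Gamma_pos_of_pos hs
  have key : Real.Gamma s * Real.sin (Real.pi * s) = Real.pi / Real.Gamma (1 - s) := by
    by_cases h0 : Real.sin (Real.pi * s) = 0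
    · rw [h0, div_zero] at hr
      have : Real.Gamma (1 - s) = 0 := by
        rcases mul_eq_zero.1 hr with h | h
        · exact absurd h hG.ne'
        · exact h
      rw [h0, this]; simp
    · have h1 : Real.Gamma (1 - s) ≠ 0 := by
        intro h1
        rw [h1, mul_zero] at hr
        exact (div_ne_zero Real.pi_pos.ne' h0) hr.symm
      rw [eq_div_iff h1, mul_right_comm, hr]
      field_simp
  calc _ = 2 * Complex.I * ((Real.Gamma s * Real.sin (Real.pi * s) : ℝ) : ℂ) := by push_cast; ring
    _ = _ := by rw [key]; push_cast; ring

lemma L_gJ_zero (c : ℝ) : L c (gJ 0) = 2 * Real.pi * Complex.I := by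
  have hj : jmp (gJ 0) = fun u => 0 := by
    funext u; rw [jmp_gJ]; simp
  have hv : Tendsto (fun c => vert c (gJ 0)) atBot (𝓝 (2 * Real.pi * Complex.I)) := by
    have h1 := vert_tendsto (fun w => gJ 0 w - 1) 2 1 one_pos (by
      filter_upwards [eventually_le_atBot 0] with c hc θ
      have hn : ‖Complex.exp (c + θ * Complex.I)‖ = Real.exp c := by
        rw [Complex.norm_exp]; simp
      have := Complex.norm_exp_sub_one_le (x := Complex.exp (c + θ * Complex.I)) (by
        rw [hn]; exact Real.exp_le_one_iff.2 hc)
      rw [hn] at this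
      simpa [gJ] using this)
    have h2 := h1.add_const (2 * Real.pi * Complex.I : ℂ)
    rw [zero_add] at h2
    refine h2.congr fun c => ?_
    unfold vert
    rw [intervalIntegral.integral_sub]
    · simp; ring
    · have : Continuous fun θ : ℝ => gJ 0 (c + θ * Complex.I) := by unfold gJ; fun_prop
      exact this.intervalIntegrable _ _
    · simp
  rw [L_eq_of_tendsto _ (fun w _ => gJ_diff 0 w) (by rw [hj]; exact integrable_zero _ _ _) _ hv, hj]
  simp

lemma gJ_tendsto (s : ℝ) :
    Tendsto (fun u : ℝ => Real.exp (-Real.exp u) * Real.exp (s * u)) atTop (𝓝 0) := by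
  have := (tendsto_rpow_mul_exp_neg_mul_atTop_nhds_zero s 1 one_pos).comp Real.tendsto_exp_atTop
  refine this.congr fun u => ?_
  simp only [Function.comp]
  rw [← Real.exp_mul, mul_comm, mul_comm u s]; simp

lemma L_gJ_rec (s c : ℝ) : L c (gJ (s + 1)) + s * L c (gJ s) = 0 := by
  have hder : ∀ w, HasDerivAt (gJ s) (gJ (s + 1) w + s * gJ s w) w := by
    intro w
    unfold gJ
    have h1 := (Complex.hasDerivAt_exp w).cexp
    have h2 := ((hasDerivAt_id w).const_mul (s : ℂ)).cexp
    refine (h1.mul h2).congr_deriv ?_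
    have : Complex.exp ((s + 1 : ℝ) * w) = Complex.exp (s * w) * Complex.exp w := by
      rw [← Complex.exp_add]; push_cast; ring_nf
    rw [this]; simp; ring
  have hA : ∀ u : ℝ, HasDerivAt (jmp (gJ s)) (jmp (gJ (s + 1)) u + s * jmp (gJ s) u) u := by
    intro u
    unfold jmp
    have h1 : HasDerivAt (fun u : ℝ => gJ s (u + Real.pi * Complex.I)) _ u :=
      HasDerivAt.comp_ofReal (e := fun z => gJ s (z + Real.pi * Complex.I))
        (HasDerivAt.comp_add_const (u : ℂ) _ (hder _))
    have h2 : HasDerivAt (fun u : ℝ => gJ s (u - Real.pi * Complex.I)) _ u :=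
      HasDerivAt.comp_ofReal (e := fun z => gJ s (z - Real.pi * Complex.I))
        (HasDerivAt.comp_sub_const (u : ℂ) _ (hder _))
    refine (h1.sub h2).congr_deriv ?_
    ring
  have hI := integral_Ioi_of_hasDerivAt_of_tendsto (a := c) (m := 0)
    (hA c).continuousAt.continuousWithinAt (fun u _ => hA u)
    ((gJ_int (s + 1) c).add ((gJ_int s c).const_mul (s : ℂ))) (by
      have : jmp (gJ s) = fun u => ((Real.exp (-Real.exp u) * Real.exp (s * u) : ℝ) : ℂ) *
        (2 * Complex.I * (Real.sin (Real.pi * s) : ℝ)) := funext fun u => jmp_gJ s u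
      rw [this]
      have := ((Complex.continuous_ofReal.tendsto 0).comp (gJ_tendsto s)).mul_const
        (2 * Complex.I * (Real.sin (Real.pi * s) : ℝ))
      simpa using this)
  rw [integral_add (gJ_int (s + 1) c) ((gJ_int s c).const_mul (s : ℂ)), integral_const_mul] at hI
  have hcont : ∀ s : ℝ, Continuous fun θ : ℝ => gJ s (c + θ * Complex.I) := by
    intro s; unfold gJ; fun_prop
  have hV := intervalIntegral.integral_eq_sub_of_hasDerivAt (a := -Real.pi) (b := Real.pi)
    (f := fun θ : ℝ => gJ s (c + θ * Complex.I))
    (f' := fun θ : ℝ => Complex.I * gJ (s + 1) (c + θ * Complex.I)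
      + Complex.I * s * gJ s (c + θ * Complex.I)) (by
      intro θ _
      have h1 : HasDerivAt (fun z : ℂ => (c : ℂ) + z * Complex.I) Complex.I (θ : ℂ) := by
        simpa using ((hasDerivAt_id (θ : ℂ)).mul_const Complex.I).const_add (c : ℂ)
      have h2 := ((hder (c + θ * Complex.I)).comp (θ : ℂ) h1).comp_ofReal
      refine h2.congr_deriv ?_
      ring) (by
      have := hcont s
      have := hcont (s + 1)
      exact (by fun_prop : Continuous _).intervalIntegrable _ _)
  rw [intervalIntegral.integral_add, intervalIntegral.integral_const_mul,
    intervalIntegral.integral_const_mul] at hV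
  · unfold L vert
    have hj : jmp (gJ s) c = gJ s (c + Real.pi * Complex.I)
      - gJ s (c + (-Real.pi : ℝ) * Complex.I) := by
      unfold jmp; push_cast; ring_nf
    rw [hj] at hI
    linear_combination hI + hV
  · have := hcont (s + 1)
    exact (by fun_prop : Continuous _).intervalIntegrable _ _
  · have := hcont s
    exact (by fun_prop : Continuous _).intervalIntegrable _ _

/-- Hankel formula for the reciprocal Gamma function. -/
lemma L_gJ (n : ℕ) : ∀ s : ℝ, -(n : ℝ) ≤ s → s < 1 → ∀ c : ℝ,
    L c (gJ s) = 2 * Real.pi * Complex.I / (Real.Gamma (1 - s) : ℝ) := by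
  induction n with
  | zero =>
    intro s hs hs1 c
    rcases eq_or_lt_of_le hs with h | h
    · have : s = 0 := by simpa using h.symm
      subst this; rw [L_gJ_zero]; simp
    · exact L_gJ_pos (by simpa using h) c
  | succ n ih =>
    intro s hs hs1 c
    by_cases h0 : 0 ≤ s
    · exact (by
        rcases eq_or_lt_of_le h0 with h | h
        · subst h; rw [L_gJ_zero]; simp
        · exact L_gJ_pos h c)
    · push Not at h0
      have h1 := L_gJ_rec s c
      rw [ih (s + 1) (by push_cast at hs; linarith) (by linarith) c] at h1
      have h2 : Real.Gamma (1 - s) = -s * Real.Gamma (1 - (s + 1)) := by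
        rw [show 1 - s = -s + 1 by ring, Real.Gamma_add_one (by linarith)]; congr 2; ring
      have hG : 0 < Real.Gamma (1 - (s + 1)) := Real.Gamma_pos_of_pos (by linarith)
      rw [h2]
      have hs0 : (s : ℂ) ≠ 0 := by exact_mod_cast h0.ne
      have hG0 : ((Real.Gamma (1 - (s + 1)) : ℝ) : ℂ) ≠ 0 := by exact_mod_cast hG.ne'
      push_cast
      apply mul_left_cancel₀ hs0
      generalize Complex.ofReal (Real.Gamma (1 - (s + 1))) = G at *
      field_simp
      field_simp at h1
      linear_combination h1

lemma gamma_sin {s : ℝ} (hs : 0 < s) :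
    Real.Gamma s * Real.sin (Real.pi * s) = Real.pi / Real.Gamma (1 - s) := by
  have hr := Real.Gamma_mul_Gamma_one_sub s
  have hG := Real.Gamma_pos_of_pos hs
  by_cases h0 : Real.sin (Real.pi * s) = 0
  · rw [h0, div_zero] at hr
    have : Real.Gamma (1 - s) = 0 := by
      rcases mul_eq_zero.1 hr with h | h
      · exact absurd h hG.ne'
      · exact h
    rw [h0, this]; simp
  · have h1 : Real.Gamma (1 - s) ≠ 0 := by
      intro h1
      rw [h1, mul_zero] at hr
      exact (div_ne_zero Real.pi_pos.ne' h0) hr.symm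
    rw [eq_div_iff h1, mul_right_comm, hr]
    field_simp

def gM (α x : ℝ) (w : ℂ) : ℂ :=
  Complex.exp (Complex.exp w) * Complex.exp w / (Complex.exp (α * w) + x)

lemma den_ne {α x : ℝ} (hα0 : 0 < α) (hα1 : α < 1) (hx : 0 < x) {w : ℂ}
    (hw : |w.im| ≤ Real.pi) : Complex.exp (α * w) + x ≠ 0 := by
  intro h
  have hpi := Real.pi_pos
  have h1 : Complex.exp (α * w) = ((-x : ℝ) : ℂ) := by
    push_cast; exact eq_neg_of_add_eq_zero_left h
  rw [abs_le] at hw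
  have him : ((α : ℂ) * w).im = α * w.im := by simp
  have h2 := Complex.log_exp (x := α * w) (by rw [him]; nlinarith) (by rw [him]; nlinarith)
  rw [h1] at h2
  have h3 := congrArg Complex.im h2
  rw [Complex.log_im, him, Complex.arg_ofReal_of_neg (by linarith)] at h3
  nlinarith

lemma gM_diff {α x : ℝ} (hα0 : 0 < α) (hα1 : α < 1) (hx : 0 < x) (w : ℂ)
    (hw : |w.im| ≤ Real.pi) : DifferentiableAt ℂ (gM α x) w := by
  unfold gM
  have := den_ne hα0 hα1 hx hw
  fun_prop (disch := assumption)

/-- the real integrand -/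
def ker (α x u : ℝ) : ℝ := Real.exp (-Real.exp u) * Real.exp ((1 + α) * u) /
  (Real.exp (α * u) ^ 2 + 2 * x * Real.exp (α * u) * Real.cos (Real.pi * α) + x ^ 2)

lemma q_lower (x y a : ℝ) : Real.sin a ^ 2 * x ^ 2 ≤ y ^ 2 + 2 * x * y * Real.cos a + x ^ 2 := by
  have := Real.sin_sq_add_cos_sq a
  nlinarith [sq_nonneg (x * Real.cos a + y)]

lemma sin_pos' {α : ℝ} (hα0 : 0 < α) (hα1 : α < 1) : 0 < Real.sin (Real.pi * α) :=
  Real.sin_pos_of_pos_of_lt_pi (by have := Real.pi_pos; positivity)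
    (by nlinarith [Real.pi_pos])

lemma q_pos {α x : ℝ} (hα0 : 0 < α) (hα1 : α < 1) (hx : 0 < x) (y : ℝ) :
    0 < y ^ 2 + 2 * x * y * Real.cos (Real.pi * α) + x ^ 2 := by
  have := sin_pos' hα0 hα1
  have := q_lower x y (Real.pi * α)
  have : 0 < Real.sin (Real.pi * α) ^ 2 * x ^ 2 := by positivity
  linarith

lemma jmp_gM {α x : ℝ} (hα0 : 0 < α) (hα1 : α < 1) (hx : 0 < x) (u : ℝ) :
    jmp (gM α x) u = (ker α x u : ℂ) * (2 * Complex.I * (Real.sin (Real.pi * α) : ℝ)) := by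
  have hpi := Real.pi_pos
  have n1 := den_ne hα0 hα1 hx (w := u + Real.pi * Complex.I) (by simp [abs_of_pos hpi])
  have n2 := den_ne hα0 hα1 hx (w := u - Real.pi * Complex.I) (by simp [abs_of_pos hpi])
  have hq := q_pos hα0 hα1 hx (Real.exp (α * u))
  have e1 : Complex.exp (α * (u + Real.pi * Complex.I)) = (Real.exp (α * u) : ℝ) *
      ((Real.cos (Real.pi * α) : ℝ) + (Real.sin (Real.pi * α) : ℝ) * Complex.I) := by
    rw [mul_add, Complex.exp_add, show (α : ℂ) * (Real.pi * Complex.I) =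
      ((Real.pi * α : ℝ) : ℂ) * Complex.I by push_cast; ring, Complex.exp_mul_I]
    push_cast; rfl
  have e2 : Complex.exp (α * (u - Real.pi * Complex.I)) = (Real.exp (α * u) : ℝ) *
      ((Real.cos (Real.pi * α) : ℝ) - (Real.sin (Real.pi * α) : ℝ) * Complex.I) := by
    rw [mul_sub, sub_eq_add_neg, Complex.exp_add, show -((α : ℂ) * (Real.pi * Complex.I)) =
      ((-(Real.pi * α) : ℝ) : ℂ) * Complex.I by push_cast; ring, Complex.exp_mul_I,
      ← Complex.ofReal_cos, ← Complex.ofReal_sin, Real.cos_neg, Real.sin_neg]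
    push_cast; ring
  have e3 : Real.exp ((1 + α) * u) = Real.exp u * Real.exp (α * u) := by
    rw [← Real.exp_add]; ring_nf
  unfold jmp gM ker
  rw [e1] at n1
  rw [e2] at n2
  rw [exp_add_pi, exp_sub_pi, e1, e2, e3, ← Complex.ofReal_exp]
  have hcs := Real.sin_sq_add_cos_sq (Real.pi * α)
  generalize Real.exp (-Real.exp u) = A at *
  generalize Real.exp u = B at *
  generalize Real.exp (α * u) = y at *
  generalize Real.cos (Real.pi * α) = c at *
  generalize Real.sin (Real.pi * α) = s at *
  have hprod : ((y : ℂ) * (c + s * Complex.I) + x) * (y * (c - s * Complex.I) + x)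
      = ((y ^ 2 + 2 * x * y * c + x ^ 2 : ℝ) : ℂ) := by
    have hcs' : (s : ℂ) ^ 2 + c ^ 2 = 1 := by exact_mod_cast hcs
    push_cast
    linear_combination (y : ℂ) ^ 2 * hcs' - (y : ℂ) ^ 2 * s ^ 2 * Complex.I_sq
  rw [div_sub_div _ _ n1 n2, hprod]
  push_cast
  ring

lemma ker_cont {α x : ℝ} (hα0 : 0 < α) (hα1 : α < 1) (hx : 0 < x) : Continuous (ker α x) := by
  unfold ker
  refine Continuous.div (by fun_prop) (by fun_prop) fun u => (q_pos hα0 hα1 hx _).ne'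

lemma ker_int {α x : ℝ} (hα0 : 0 < α) (hα1 : α < 1) (hx : 0 < x) : Integrable (ker α x) := by
  have h := (expint (s := 1 + α) (by linarith)).1
  refine Integrable.mono' (h.div_const (Real.sin (Real.pi * α) ^ 2 * x ^ 2))
    (ker_cont hα0 hα1 hx).aestronglyMeasurable (Eventually.of_forall fun u => ?_)
  have := sin_pos' hα0 hα1
  have hq := q_pos hα0 hα1 hx (Real.exp (α * u))
  unfold ker
  rw [Real.norm_of_nonneg (by positivity)]
  gcongr
  exact q_lower _ _ _

lemma L_gM {α x : ℝ} (hα0 : 0 < α) (hα1 : α < 1) (hx : 0 < x) (c : ℝ) :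
    L c (gM α x) = ((∫ u, ker α x u : ℝ) : ℂ) * (2 * Complex.I * (Real.sin (Real.pi * α) : ℝ)) := by
  have hj : jmp (gM α x) = fun u => (ker α x u : ℂ) * (2 * Complex.I * (Real.sin (Real.pi * α) : ℝ)) :=
    funext fun u => jmp_gM hα0 hα1 hx u
  have hv := vert_tendsto (gM α x) (Real.exp 1 / (x / 2)) 1 one_pos (by
    have ht : Tendsto (fun c : ℝ => Real.exp (α * c)) atBot (𝓝 0) :=
      Real.tendsto_exp_atBot.comp (tendsto_id.const_mul_atBot hα0)
    filter_upwards [eventually_le_atBot 0, ht.eventually_le_const (half_pos hx)] with c hc hc2 θ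
    have hn : ‖Complex.exp (α * (c + θ * Complex.I))‖ = Real.exp (α * c) := by
      rw [Complex.norm_exp]; simp
    have hn2 : ‖Complex.exp (c + θ * Complex.I)‖ = Real.exp c := by
      rw [Complex.norm_exp]; simp
    have hn3 : ‖Complex.exp (Complex.exp (c + θ * Complex.I))‖ ≤ Real.exp 1 := by
      refine (Complex.norm_exp_le_exp_norm _).trans ?_
      rw [hn2]; exact Real.exp_le_exp.2 (Real.exp_le_one_iff.2 hc)
    have hn4 : x / 2 ≤ ‖Complex.exp (α * (c + θ * Complex.I)) + x‖ := by
      have h1 := norm_sub_le (Complex.exp (α * (c + θ * Complex.I)) + x)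
        (Complex.exp (α * (c + θ * Complex.I)))
      rw [add_sub_cancel_left, hn, Complex.norm_of_nonneg hx.le] at h1
      linarith
    unfold gM
    rw [norm_div, norm_mul, hn2, one_mul, div_mul_eq_mul_div]
    gcongr)
  rw [L_eq_of_tendsto _ (gM_diff hα0 hα1 hx) (by rw [hj]; exact (ker_int hα0 hα1 hx).ofReal.mul_const _) 0 hv,
    zero_add, hj, integral_mul_const, integral_complex_ofReal]

lemma gM_hasSum {α x : ℝ} (hx : 0 < x) {c : ℝ} (hα0 : 0 < α)
    (hc : x * Real.exp (-(α * c)) ≤ 1 / 2) (w : ℂ) (hw : c ≤ w.re) :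
    HasSum (fun j : ℕ => (-x : ℂ) ^ j * gJ (1 - α * (j + 1)) w) (gM α x w) := by
  have hr : ‖-x * Complex.exp (-(α * w))‖ < 1 := by
    rw [norm_mul, norm_neg, Complex.norm_of_nonneg hx.le, Complex.norm_exp]
    have : Real.exp (-(α * w)).re ≤ Real.exp (-(α * c)) := by
      apply Real.exp_le_exp.2; simp; nlinarith
    nlinarith
  have h := (hasSum_geometric_of_norm_lt_one hr).mul_left (gJ (1 - α) w)
  have hne : Complex.exp (α * w) ≠ 0 := Complex.exp_ne_zero _
  have e : gM α x w = gJ (1 - α) w * (1 - -x * Complex.exp (-(α * w)))⁻¹ := by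
    unfold gM gJ
    have h1 : Complex.exp (((1 - α : ℝ) : ℂ) * w) = Complex.exp w / Complex.exp (α * w) := by
      rw [← Complex.exp_sub]; push_cast; ring_nf
    have h2 : (1 - -x * Complex.exp (-(α * w))) =
        (Complex.exp (α * w) + x) / Complex.exp (α * w) := by
      rw [Complex.exp_neg]; field_simp; ring
    rw [h1, h2, inv_div]
    field_simp
  rw [e]
  refine h.congr_fun ?_ 
  intro j
  unfold gJ
  rw [mul_pow, ← Complex.exp_nat_mul]
  have : Complex.exp (((1 - α * (j + 1) : ℝ) : ℂ) * w) =
      Complex.exp (((1 - α : ℝ) : ℂ) * w) * Complex.exp (j * -(α * w)) := by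
    rw [← Complex.exp_add]; push_cast; ring_nf
  rw [this]; ring

lemma pow_bound {α x : ℝ} (hx : 0 < x) {c : ℝ} (hα0 : 0 < α)
    (hc : x * Real.exp (-(α * c)) ≤ 1 / 2) (u : ℝ) (hu : c ≤ u) (j : ℕ) :
    x ^ j * Real.exp ((1 - α * (j + 1)) * u) ≤ Real.exp ((1 - α) * u) * (1 / 2) ^ j := by
  have h1 : Real.exp ((1 - α * (j + 1)) * u) = Real.exp ((1 - α) * u) * Real.exp (-(α * u)) ^ j := by
    rw [← Real.exp_nat_mul, ← Real.exp_add]; ring_nf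
  have h2 : x * Real.exp (-(α * u)) ≤ 1 / 2 := by
    refine le_trans ?_ hc
    gcongr
  calc _ = Real.exp ((1 - α) * u) * (x * Real.exp (-(α * u))) ^ j := by rw [h1, mul_pow]; ring
    _ ≤ _ := by gcongr

lemma hasSum_L {α x : ℝ} (hx : 0 < x) {c : ℝ} (hα0 : 0 < α)
    (hc : x * Real.exp (-(α * c)) ≤ 1 / 2) :
    HasSum (fun j : ℕ => (-x : ℂ) ^ j * L c (gJ (1 - α * (j + 1)))) (L c (gM α x)) := by
  have hgeo : Summable fun j : ℕ => (1 / 2 : ℝ) ^ j := summable_geometric_two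
  have hV : HasSum (fun j : ℕ => (-x : ℂ) ^ j * vert c (gJ (1 - α * (j + 1)))) (vert c (gM α x)) := by
    have := intervalIntegral.hasSum_integral_of_dominated_convergence (μ := volume)
      (a := -Real.pi) (b := Real.pi)
      (F := fun (j : ℕ) (θ : ℝ) => (-x : ℂ) ^ j * gJ (1 - α * (j + 1)) (c + θ * Complex.I))
      (f := fun θ : ℝ => gM α x (c + θ * Complex.I))
      (fun j _ => Real.exp (Real.exp c) * Real.exp ((1 - α) * c) * (1 / 2) ^ j)
      (fun j => by
        unfold gJ
        exact (by fun_prop : Continuous _).aestronglyMeasurable)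
      (fun j => Eventually.of_forall fun θ _ => by
        rw [norm_mul, norm_pow, norm_neg, Complex.norm_of_nonneg hx.le]
        have h1 := norm_gJ_le (1 - α * (j + 1)) c θ
        have h2 := pow_bound hx hα0 hc c le_rfl j
        calc _ ≤ x ^ j * (Real.exp (Real.exp c) * Real.exp ((1 - α * (j + 1)) * c)) := by gcongr
          _ = Real.exp (Real.exp c) * (x ^ j * Real.exp ((1 - α * (j + 1)) * c)) := by ring
          _ ≤ Real.exp (Real.exp c) * (Real.exp ((1 - α) * c) * (1 / 2) ^ j) := by gcongr
          _ = _ := by ring)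
      (Eventually.of_forall fun θ _ => hgeo.mul_left _)
      (by simp)
      (Eventually.of_forall fun θ _ => gM_hasSum hx hα0 hc _ (by simp))
    have := this.mul_left Complex.I
    unfold vert
    refine this.congr_fun fun j => ?_
    rw [intervalIntegral.integral_const_mul]; ring
  have hH : HasSum (fun j : ℕ => (-x : ℂ) ^ j * ∫ u in Ioi c, jmp (gJ (1 - α * (j + 1))) u)
      (∫ u in Ioi c, jmp (gM α x) u) := by
    have := hasSum_integral_of_dominated_convergence (μ := volume.restrict (Ioi c))
      (F := fun (j : ℕ) (u : ℝ) => (-x : ℂ) ^ j * jmp (gJ (1 - α * (j + 1))) u)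
      (f := jmp (gM α x))
      (fun j u => 2 * (Real.exp (-Real.exp u) * Real.exp ((1 - α) * u)) * (1 / 2) ^ j)
      (fun j => (gJ_int _ c).aestronglyMeasurable.const_mul _)
      (fun j => (ae_restrict_iff' measurableSet_Ioi).2 (Eventually.of_forall fun u hu => by
        have h2 := pow_bound hx hα0 hc u (le_of_lt hu) j
        rw [norm_mul, norm_pow, norm_neg, Complex.norm_of_nonneg hx.le, jmp_gJ, norm_mul,
          Complex.norm_of_nonneg (by positivity)]
        have h3 : ‖(2 * Complex.I * (Real.sin (Real.pi * (1 - α * (j + 1))) : ℝ) : ℂ)‖ ≤ 2 := by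
          rw [norm_mul, norm_mul, Complex.norm_I, Complex.norm_real, Real.norm_eq_abs]
          have := Real.abs_sin_le_one (Real.pi * (1 - α * (j + 1)))
          simp only [Complex.norm_ofNat]
          linarith
        calc _ ≤ x ^ j * (Real.exp (-Real.exp u) * Real.exp ((1 - α * (j + 1)) * u) * 2) := by gcongr
          _ = 2 * Real.exp (-Real.exp u) * (x ^ j * Real.exp ((1 - α * (j + 1)) * u)) := by ring
          _ ≤ 2 * Real.exp (-Real.exp u) * (Real.exp ((1 - α) * u) * (1 / 2) ^ j) := by gcongr
          _ = _ := by ring))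
      (Eventually.of_forall fun u => hgeo.mul_left _)
      (by
        simp_rw [tsum_mul_left]
        exact ((expint_Ioi (1 - α) c).const_mul 2).mul_const _)
      ((ae_restrict_iff' measurableSet_Ioi).2 (Eventually.of_forall fun u hu => by
        have hu : c < u := hu
        have h1 := gM_hasSum hx hα0 hc (u + Real.pi * Complex.I) (by simp [hu.le])
        have h2 := gM_hasSum hx hα0 hc (u - Real.pi * Complex.I) (by simp [hu.le])
        refine (h1.sub h2).congr_fun fun j => ?_
        unfold jmp; ring))
    refine this.congr_fun fun j => ?_
    rw [integral_const_mul]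
  unfold L
  refine (hV.add hH).congr_fun fun j => ?_
  ring

/-- Integral representation of the Mittag-Leffler function. -/
lemma ML_integral {α x : ℝ} (hα0 : 0 < α) (hα1 : α < 1) (hx : 0 < x) :
    ∑' k : ℕ, (-x) ^ k / Real.Gamma (α * k + α) =
      Real.sin (Real.pi * α) / Real.pi * ∫ u, ker α x u := by
  obtain ⟨c, hc⟩ : ∃ c : ℝ, x * Real.exp (-(α * c)) ≤ 1 / 2 := by
    refine ⟨Real.log (2 * x) / α, ?_⟩
    rw [mul_div_cancel₀ _ hα0.ne', Real.exp_neg, Real.exp_log (by positivity)]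
    apply le_of_eq; field_simp
  have h := hasSum_L hx hα0 hc
  rw [L_gM hα0 hα1 hx] at h
  have h2 := h.mul_left ((2 * Real.pi * Complex.I : ℂ)⁻¹)
  have hpi : (Real.pi : ℂ) ≠ 0 := by exact_mod_cast Real.pi_pos.ne'
  have h3 : HasSum (fun k : ℕ => (((-x) ^ k / Real.Gamma (α * k + α) : ℝ) : ℂ))
      ((Real.sin (Real.pi * α) / Real.pi * ∫ u, ker α x u : ℝ) : ℂ) := by
    have e : ((Real.sin (Real.pi * α) / Real.pi * ∫ u, ker α x u : ℝ) : ℂ) =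
      (2 * Real.pi * Complex.I : ℂ)⁻¹ *
        (((∫ u, ker α x u : ℝ) : ℂ) * (2 * Complex.I * (Real.sin (Real.pi * α) : ℝ))) := by
      have := Complex.I_ne_zero
      rw [Complex.ofReal_mul, Complex.ofReal_div]
      field_simp
    rw [e]
    refine h2.congr_fun fun j => ?_
    obtain ⟨n, hn⟩ := exists_nat_ge (-(1 - α * (j + 1)))
    rw [L_gJ n _ (by linarith) (by have : 0 < α * ((j : ℝ) + 1) := by positivity
                                   linarith) c]
    rw [show 1 - (1 - α * ((j : ℝ) + 1)) = α * j + α by ring]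
    have := Complex.I_ne_zero
    push_cast
    field_simp
  exact (Complex.hasSum_ofReal.1 h3).tsum_eq

lemma q_expand {x y c s : ℝ} (hcs : s ^ 2 + c ^ 2 = 1) (hs : 0 < s) (hx : 1 ≤ x) (hy : 0 < y)
    (hq : s ^ 2 * x ^ 2 ≤ y ^ 2 + 2 * x * y * c + x ^ 2) :
    |1 / (y ^ 2 + 2 * x * y * c + x ^ 2) - 1 / x ^ 2 + 2 * c * y / x ^ 3| ≤
      (3 * y ^ 2 + 2 * y ^ 3) / s ^ 2 / x ^ 4 := by
  have hx0 : 0 < x := by linarith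
  have hq0 : 0 < y ^ 2 + 2 * x * y * c + x ^ 2 := lt_of_lt_of_le (by positivity) hq
  have hc1 : c ^ 2 ≤ 1 := by nlinarith
  have hcl : |c| ≤ 1 := by rwa [← sq_le_one_iff_abs_le_one]
  have e : 1 / (y ^ 2 + 2 * x * y * c + x ^ 2) - 1 / x ^ 2 + 2 * c * y / x ^ 3 =
      (x * y ^ 2 * (4 * c ^ 2 - 1) + 2 * y ^ 3 * c) / (x ^ 3 * (y ^ 2 + 2 * x * y * c + x ^ 2)) := by
    have hne := hq0.ne'
    generalize hQ : y ^ 2 + 2 * x * y * c + x ^ 2 = q at hne ⊢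
    field_simp
    rw [← hQ]
    ring
  have hnum : |x * y ^ 2 * (4 * c ^ 2 - 1) + 2 * y ^ 3 * c| ≤ x * (3 * y ^ 2 + 2 * y ^ 3) := by
    have h1 : |x * y ^ 2 * (4 * c ^ 2 - 1)| ≤ x * y ^ 2 * 3 := by
      rw [abs_mul, abs_of_pos (by positivity : 0 < x * y ^ 2)]
      gcongr
      rw [abs_le]; constructor <;> nlinarith [sq_nonneg c]
    have h2 : |2 * y ^ 3 * c| ≤ x * (2 * y ^ 3) := by
      rw [abs_mul, abs_of_pos (by positivity : 0 < 2 * y ^ 3)]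
      have : 0 < 2 * y ^ 3 := by positivity
      nlinarith
    calc _ ≤ _ := abs_add_le _ _
      _ ≤ x * y ^ 2 * 3 + x * (2 * y ^ 3) := add_le_add h1 h2
      _ = _ := by ring
  rw [e, abs_div, abs_of_pos (by positivity : 0 < x ^ 3 * (y ^ 2 + 2 * x * y * c + x ^ 2))]
  calc _ ≤ x * (3 * y ^ 2 + 2 * y ^ 3) / (x ^ 3 * (s ^ 2 * x ^ 2)) := by gcongr
    _ = _ := by field_simp

lemma ker_asymp {α : ℝ} (hα0 : 0 < α) (hα1 : α < 1) : ∃ C : ℝ, 0 ≤ C ∧ ∀ x : ℝ, 1 ≤ x →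
    |(∫ u, ker α x u) - (Real.Gamma (1 + α) / x ^ 2
      - 2 * Real.cos (Real.pi * α) * Real.Gamma (1 + 2 * α) / x ^ 3)| ≤ C / x ^ 4 := by
  have hs := sin_pos' hα0 hα1
  obtain ⟨i1, v1⟩ := expint (s := 1 + α) (by linarith)
  obtain ⟨i2, v2⟩ := expint (s := 1 + 2 * α) (by linarith)
  obtain ⟨i3, v3⟩ := expint (s := 1 + 3 * α) (by linarith)
  obtain ⟨i4, v4⟩ := expint (s := 1 + 4 * α) (by linarith)
  have p3 : 0 < Real.Gamma (1 + 3 * α) := Real.Gamma_pos_of_pos (by linarith)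
  have p4 : 0 < Real.Gamma (1 + 4 * α) := Real.Gamma_pos_of_pos (by linarith)
  refine ⟨(3 * Real.Gamma (1 + 3 * α) + 2 * Real.Gamma (1 + 4 * α)) / Real.sin (Real.pi * α) ^ 2,
    by positivity, fun x hx => ?_⟩
  have hx0 : 0 < x := by linarith
  have hk := ker_int hα0 hα1 hx0
  have i12 : Integrable (fun u : ℝ => Real.exp (-Real.exp u) * Real.exp ((1 + α) * u) / x ^ 2 -
      2 * Real.cos (Real.pi * α) * (Real.exp (-Real.exp u) * Real.exp ((1 + 2 * α) * u)) / x ^ 3) :=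
    (i1.div_const _).sub ((i2.const_mul _).div_const _)
  rw [← v1, ← v2, ← v3, ← v4, ← integral_const_mul, ← integral_const_mul, ← integral_const_mul,
    ← integral_div, ← integral_div, ← integral_sub (i1.div_const _) ((i2.const_mul _).div_const _),
    ← integral_sub hk i12,
    ← integral_add (i3.const_mul _) (i4.const_mul _), ← integral_div, ← integral_div,
    ← Real.norm_eq_abs]
  refine norm_integral_le_of_norm_le ((((i3.const_mul _).add (i4.const_mul _)).div_const _).div_const _)
    (Eventually.of_forall fun u => ?_)
  have hm : ∀ n : ℕ, Real.exp ((1 + n * α) * u) = Real.exp u * Real.exp (α * u) ^ n := by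
    intro n
    rw [← Real.exp_nat_mul, ← Real.exp_add]; ring_nf
  have m1 := hm 1
  have m2 := hm 2
  have m3 := hm 3
  have m4 := hm 4
  push_cast at m1 m2 m3 m4
  rw [one_mul] at m1
  have hE := q_expand (Real.sin_sq_add_cos_sq (Real.pi * α)) hs hx (Real.exp_pos (α * u))
    (q_lower x (Real.exp (α * u)) (Real.pi * α))
  rw [Real.norm_eq_abs]
  unfold ker
  rw [m1, m2, m3, m4]
  have hA := Real.exp_pos (-Real.exp u)
  have hB := Real.exp_pos u
  have hy := Real.exp_pos (α * u)
  generalize Real.exp (-Real.exp u) = A at *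
  generalize Real.exp u = B at *
  generalize Real.exp (α * u) = y at *
  have hw : 0 < A * (B * y ^ 1) := by positivity
  calc _ = |A * (B * y ^ 1) * (1 / (y ^ 2 + 2 * x * y * Real.cos (Real.pi * α) + x ^ 2) - 1 / x ^ 2
        + 2 * Real.cos (Real.pi * α) * y / x ^ 3)| := by congr 1; ring
    _ = A * (B * y ^ 1) * |1 / (y ^ 2 + 2 * x * y * Real.cos (Real.pi * α) + x ^ 2) - 1 / x ^ 2
        + 2 * Real.cos (Real.pi * α) * y / x ^ 3| := by rw [abs_mul, abs_of_pos hw]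
    _ ≤ A * (B * y ^ 1) * ((3 * y ^ 2 + 2 * y ^ 3) / Real.sin (Real.pi * α) ^ 2 / x ^ 4) := by gcongr
    _ = _ := by ring

lemma pade_asymp {α G0 G m : ℝ} (hα0 : 0 < α) (hG : 0 < G) (hG0 : 0 < G0) {x : ℝ} (hx : 1 ≤ x)
    (hx2 : 2 * |m| / G ≤ x) :
    |α / (G0 + m * x + G * x ^ 2) - (α / G / x ^ 2 - α * m / G ^ 2 / x ^ 3)| ≤
      2 * α * (|m ^ 2 - G * G0| + |m| * G0) / G ^ 3 / x ^ 4 := by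
  have hx0 : 0 < x := by linarith
  have hm : 2 * |m| ≤ x * G := by rwa [div_le_iff₀ hG] at hx2
  have hD : G / 2 * x ^ 2 ≤ G0 + m * x + G * x ^ 2 := by
    nlinarith [neg_abs_le m]
  have hD0 : 0 < G0 + m * x + G * x ^ 2 := lt_of_lt_of_le (by positivity) hD
  have e : α / (G0 + m * x + G * x ^ 2) - (α / G / x ^ 2 - α * m / G ^ 2 / x ^ 3) =
      α * ((m ^ 2 - G * G0) * x + m * G0) / (G ^ 2 * x ^ 3 * (G0 + m * x + G * x ^ 2)) := by
    have hne := hD0.ne'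
    generalize hQ : G0 + m * x + G * x ^ 2 = q at hne ⊢
    field_simp
    rw [← hQ]
    ring
  rw [e, abs_div, abs_mul, abs_of_pos hα0,
    abs_of_pos (by positivity : 0 < G ^ 2 * x ^ 3 * (G0 + m * x + G * x ^ 2))]
  have hn : |(m ^ 2 - G * G0) * x + m * G0| ≤ (|m ^ 2 - G * G0| + |m| * G0) * x := by
    refine (abs_add_le _ _).trans ?_
    rw [abs_mul, abs_mul, abs_of_pos hx0, abs_of_pos hG0]
    have : 0 ≤ |m| * G0 := by positivity
    nlinarith
  calc _ ≤ α * ((|m ^ 2 - G * G0| + |m| * G0) * x) / (G ^ 2 * x ^ 3 * (G / 2 * x ^ 2)) := by gcongr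
    _ = _ := by field_simp

end ZC
end

/-- The second-order global Padé approximant of Zeng and Chen for `E_{α,α}(-x)`
has error `O(x^{-4})` as `x → ∞`. -/
theorem zengChen_second_order_error_at_infinity
    (α : ℝ) (hα0 : 0 < α) (hα1 : α < 1) :
    ∃ C > (0 : ℝ), ∃ R > (0 : ℝ), ∀ x : ℝ, R < x →
      |(∑' k : ℕ, (-x) ^ k / Real.Gamma (α * k + α))
        - α / (Real.Gamma (1 + α)
            + (2 * Real.Gamma (1 - α) ^ 2 / Real.Gamma (1 - 2 * α)) * x
            + Real.Gamma (1 - α) * x ^ 2)|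
      ≤ C * x ^ (-(4 : ℤ)) := by
  obtain ⟨C1, hC1, hK⟩ := ZC.ker_asymp hα0 hα1
  have hs := ZC.sin_pos' hα0 hα1
  have hpi := Real.pi_pos
  have hG : 0 < Real.Gamma (1 - α) := Real.Gamma_pos_of_pos (by linarith)
  have hG0 : 0 < Real.Gamma (1 + α) := Real.Gamma_pos_of_pos (by linarith)
  have k1 : Real.sin (Real.pi * α) / Real.pi * Real.Gamma (1 + α) = α / Real.Gamma (1 - α) := by
    have h := ZC.gamma_sin hα0
    rw [add_comm, Real.Gamma_add_one hα0.ne']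
    calc _ = α / Real.pi * (Real.Gamma α * Real.sin (Real.pi * α)) := by ring
      _ = _ := by rw [h]; field_simp
  have k2 : Real.sin (Real.pi * α) / Real.pi *
      (2 * Real.cos (Real.pi * α) * Real.Gamma (1 + 2 * α)) =
      α * (2 * Real.Gamma (1 - α) ^ 2 / Real.Gamma (1 - 2 * α)) / Real.Gamma (1 - α) ^ 2 := by
    have h := ZC.gamma_sin (s := 2 * α) (by linarith)
    rw [show Real.pi * (2 * α) = 2 * (Real.pi * α) by ring, Real.sin_two_mul] at h
    rw [add_comm, Real.Gamma_add_one (by linarith)]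
    calc _ = 2 * α / Real.pi * (Real.Gamma (2 * α) *
          (2 * Real.sin (Real.pi * α) * Real.cos (Real.pi * α))) := by ring
      _ = 2 * α / Real.Gamma (1 - 2 * α) := by rw [h]; field_simp
      _ = _ := by field_simp
  generalize 2 * Real.Gamma (1 - α) ^ 2 / Real.Gamma (1 - 2 * α) = m at *
  generalize Real.Gamma (1 - α) = G at *
  set C2 := 2 * α * (|m ^ 2 - G * Real.Gamma (1 + α)| + |m| * Real.Gamma (1 + α)) / G ^ 3 with hC2
  have hC2' : 0 ≤ C2 := by positivity
  refine ⟨Real.sin (Real.pi * α) / Real.pi * C1 + C2 + 1, by positivity, 1 + 2 * |m| / G,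
    by positivity, fun x hx => ?_⟩
  have hmG : 0 ≤ 2 * |m| / G := by positivity
  have hx1 : 1 ≤ x := by linarith
  have hx0 : 0 < x := by linarith
  have hA := hK x hx1
  have hB := ZC.pade_asymp (m := m) hα0 hG hG0 hx1 (by linarith)
  rw [ZC.ML_integral hα0 hα1 hx0]
  have hA2 : |Real.sin (Real.pi * α) / Real.pi * (∫ u, ZC.ker α x u) -
      (α / G / x ^ 2 - α * m / G ^ 2 / x ^ 3)| ≤ Real.sin (Real.pi * α) / Real.pi * (C1 / x ^ 4) := by
    rw [← k1, ← k2]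
    have hp : 0 < Real.sin (Real.pi * α) / Real.pi := by positivity
    calc _ = |Real.sin (Real.pi * α) / Real.pi * ((∫ u, ZC.ker α x u) -
          (Real.Gamma (1 + α) / x ^ 2
            - 2 * Real.cos (Real.pi * α) * Real.Gamma (1 + 2 * α) / x ^ 3))| := by
            congr 1; ring
      _ ≤ _ := by
        rw [abs_mul, abs_of_pos hp]
        gcongr
  have hz : x ^ (-(4 : ℤ)) = 1 / x ^ 4 := by
    rw [zpow_neg, one_div]; norm_cast
  rw [hz]
  have h4 : 0 < 1 / x ^ 4 := by positivity
  calc _ ≤ _ := abs_sub_le _ (α / G / x ^ 2 - α * m / G ^ 2 / x ^ 3) _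
    _ ≤ Real.sin (Real.pi * α) / Real.pi * (C1 / x ^ 4) + C2 / x ^ 4 := by
      rw [abs_sub_comm _ (α / (_ + _ + _))]
      exact add_le_add hA2 hB
    _ = (Real.sin (Real.pi * α) / Real.pi * C1 + C2) * (1 / x ^ 4) := by ring
    _ ≤ _ := mul_le_mul_of_nonneg_right (by linarith) h4.le
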